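/- The infinite series identity 512√3/81 = Σ_{k=0}^{∞} (1/64)^k · [(-1/6)_k (7/6)_k (3/2)_k] / [(1)_k (4/3)_k (5/3)_k] · (14k + 11) holds, where the sum is over natural numbers k and all quantities are real numbers. -/

import Mathlib

noncomputable def risingFactorial (a : ℝ) (k : ℕ) : ℝ := ∏ i ∈ Finset.range k, (a + i)

noncomputable def dco (n : ℕ) : ℝ := Ring.choose (1/2 : ℝ) n * (-1/4) ^ n

theorem dco_zero : dco 0 = 1 := by simp [dco]

theorem dco_succ (n : ℕ) : dco (n+1) = dco n * ((2 * n - 1) / (8 * (n + 1))) := by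
  unfold dco
  have h : Ring.choose (1/2 : ℝ) (n+1) = Ring.choose (1/2 : ℝ) n * ((1/2 - n) / (n+1)) := by
    rw [Ring.choose_eq_smul, Ring.choose_eq_smul, descPochhammer_succ_right]
    rw [Polynomial.smeval_mul, Polynomial.smeval_sub, Polynomial.smeval_X,
      Polynomial.smeval_natCast, Nat.factorial_succ]
    have : (Nat.factorial n : ℝ) ≠ 0 := by positivity
    have : (n : ℝ) + 1 ≠ 0 := by positivity
    simp
    field_simp
  rw [h, pow_succ]
  have : (n : ℝ) + 1 ≠ 0 := by positivity
  field_simp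
  ring

theorem dco_bound (n : ℕ) : |dco n| ≤ (1/4) ^ n := by
  induction n with
  | zero => simp [dco_zero]
  | succ n ih =>
    rw [dco_succ, abs_mul, pow_succ]
    have hn : (0:ℝ) ≤ n := by positivity
    apply mul_le_mul ih _ (abs_nonneg _) (by positivity)
    rw [abs_le]
    constructor
    · rw [le_div_iff₀ (by positivity)]; linarith
    · rw [div_le_iff₀ (by positivity)]; linarith

theorem dco_hasSum : HasSum dco (Real.sqrt 3 / 2) := by
  have h := (Real.one_add_rpow_hasFPowerSeriesOnBall_zero (a := 1/2)).hasSum (y := (-1/4 : ℝ))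
    (by
      rw [Metric.mem_eball, edist_zero_right, ← ofReal_norm]
      rw [ENNReal.ofReal_lt_one]
      norm_num [Real.norm_eq_abs, abs_lt])
  have e : Real.sqrt 3 / 2 = (1 + (0 + (-1/4:ℝ))) ^ (1/2 : ℝ) := by
    rw [← Real.sqrt_eq_rpow, show (1 + (0 + (-1/4:ℝ))) = 3 / 2^2 by norm_num,
      Real.sqrt_div (by norm_num), Real.sqrt_sq (by norm_num)]
  rw [e]
  have hf : dco = fun n => (binomialSeries ℝ (1/2 : ℝ) n) fun _ => (-1/4 : ℝ) := by
    funext n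
    simp [dco, binomialSeries, mul_comm, div_pow]
  rw [hf]
  exact h

noncomputable def wterm (k : ℕ) : ℝ :=
  (1/64 : ℝ) ^ k * (risingFactorial (-1/6) k * risingFactorial (7/6) k * risingFactorial (3/2) k) /
        (risingFactorial (1) k * risingFactorial (4/3) k * risingFactorial (5/3) k)

theorem rf_succ (a : ℝ) (k : ℕ) : risingFactorial a (k+1) = risingFactorial a k * (a + k) := by
  simp [risingFactorial, Finset.prod_range_succ]

theorem wterm_succ (k : ℕ) : wterm (k+1) =
    wterm k * ((k - 1/6) * (k + 7/6) * (k + 3/2) / (64 * (k+1) * (k+4/3) * (k+5/3))) := by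
  unfold wterm
  simp only [rf_succ, pow_succ, div_eq_mul_inv, mul_inv]
  ring

theorem wterm_eq (k : ℕ) : wterm k =
    dco (3*k) * (2 * (6*k+1) * (6*k+3) / (3 * (3*k+1) * (3*k+2))) := by
  induction k with
  | zero => simp [wterm, risingFactorial, dco_zero]; norm_num
  | succ k ih =>
    rw [wterm_succ, ih, show 3*(k+1) = 3*k+1+1+1 by ring, dco_succ, dco_succ, dco_succ]
    push_cast
    field_simp
    ring

theorem term_eq (k : ℕ) : wterm k * (14*k+11) =
    1024/81 * (dco (3*k) + dco (3*k+1) + dco (3*k+2))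
     - 1024/81 * ((3*k+3) * dco (3*k+3) - 3*k*dco (3*k)) := by
  rw [wterm_eq, dco_succ (3*k+2), dco_succ (3*k+1), dco_succ (3*k)]
  push_cast
  field_simp
  ring

theorem partial_eq (K : ℕ) : ∑ k ∈ Finset.range K, wterm k * (14*k+11) =
    1024/81 * (∑ n ∈ Finset.range (3*K), dco n) - 1024/81 * (((3*K : ℕ):ℝ) * dco (3*K)) := by
  induction K with
  | zero => simp
  | succ K ih =>
    rw [Finset.sum_range_succ, ih, term_eq, show 3*(K+1) = 3*K+1+1+1 by ring,
      Finset.sum_range_succ, Finset.sum_range_succ, Finset.sum_range_succ]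
    push_cast
    ring

theorem term_summable : Summable (fun k : ℕ => wterm k * (14*k+11)) := by
  have s1 : Summable (fun k : ℕ => (k:ℝ)^1 * (1/64:ℝ)^k) :=
    summable_pow_mul_geometric_of_norm_lt_one 1 (by norm_num)
  have s0 : Summable (fun k : ℕ => (1/64:ℝ)^k) :=
    summable_geometric_of_lt_one (by norm_num) (by norm_num)
  refine Summable.of_norm_bounded ((s1.mul_left 56).add (s0.mul_left 44)) (fun k => ?_)
  have hk : (0:ℝ) ≤ k := by positivity
  have hd := dco_bound (3*k)
  rw [pow_mul] at hd
  norm_num at hd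
  rw [wterm_eq, Real.norm_eq_abs, abs_mul, abs_mul, abs_of_nonneg (a := (14*k+11 : ℝ)) (by positivity),
    abs_of_nonneg (a := 2 * (6*k+1) * (6*k+3) / (3 * (3*k+1) * (3*k+2) : ℝ)) (by positivity)]
  have h4 : 2 * (6*k+1) * (6*k+3) / (3 * (3*k+1) * (3*k+2) : ℝ) ≤ 4 := by
    rw [div_le_iff₀ (by positivity)]; nlinarith
  calc _ ≤ (1/64:ℝ)^k * 4 * (14*k+11) := by
        gcongr
    _ = _ := by ring

theorem stmt_7 :
    512 * Real.sqrt 3 / 81 =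
      ∑' k : ℕ, (1/64 : ℝ) ^ k * (risingFactorial (-1/6) k * risingFactorial (7/6) k * risingFactorial (3/2) k) /
        (risingFactorial (1) k * risingFactorial (4/3) k * risingFactorial (5/3) k) * (14 * (k:ℝ) + 11) := by
  have h1 := term_summable.hasSum.tendsto_sum_nat
  have h3 : Filter.Tendsto (fun K : ℕ => 3*K) Filter.atTop Filter.atTop :=
    Filter.tendsto_id.const_mul_atTop' (by norm_num)
  have h0 : Filter.Tendsto (fun n : ℕ => (n:ℝ) * dco n) Filter.atTop (nhds 0) := by
    have s1 : Filter.Tendsto (fun k : ℕ => (k:ℝ) * (1/4:ℝ)^k) Filter.atTop (nhds 0) :=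
      tendsto_self_mul_const_pow_of_lt_one (by norm_num) (by norm_num)
    refine squeeze_zero_norm (fun n => ?_) s1
    rw [norm_mul, Real.norm_eq_abs, Real.norm_eq_abs, Nat.abs_cast]
    gcongr
    exact dco_bound n
  have h2 := ((dco_hasSum.tendsto_sum_nat.comp h3).const_mul (1024/81)).sub
    ((h0.comp h3).const_mul (1024/81))
  have h := tendsto_nhds_unique (h1.congr partial_eq) h2
  change _ = ∑' k : ℕ, wterm k * (14*k+11)
  rw [h]
  ring
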